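/- Let K be a nondegenerate compact convex subset of ℝ², and let x₁, x₂, x₃, x₄ be points appearing in clockwise (cyclic) order on the boundary of K. Let F be a compact subset of K. If x₁ and x₃ lie in the same connected component of F, and x₂ and x₄ lie in the same connected component of F, then all four points lie in a single connected component of F. -/

import Mathlib

open Set Complex

/-- A continuous function on a preconnected set with constant exponential is constant. -/
theorem IsPreconnected.eq_of_exp_eq {X : Type*} [TopologicalSpace X] {s : Set X}
    (hs : IsPreconnected s) {f : X → ℂ} (hf : ContinuousOn f s)
    (hexp : ∀ x ∈ s, ∀ y ∈ s, exp (f x) = exp (f y)) {x y : X} (hx : x ∈ s) (hy : y ∈ s) :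
    f x = f y :=
  isCoveringMap_exp.constOn_of_comp hs hf
    (fun a ha b hb ↦ Subtype.ext (hexp a ha b hb)) hx hy

/-- The increment of a logarithm of a function with values in a punctured closed half-plane
depends only on the values of the function. -/
theorem IsPreconnected.sub_eq_log_sub_log {X : Type*} [TopologicalSpace X] {s : Set X}
    (hs : IsPreconnected s) {f : X → ℂ} (hf : ContinuousOn f s) {c : ℂ} (hc : c ≠ 0)
    (hre : ∀ x ∈ s, 0 ≤ (c * exp (f x)).re) {x y : X} (hx : x ∈ s) (hy : y ∈ s) :
    f x - f y = log (c * exp (f x)) - log (c * exp (f y)) := by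
  have hne (x : X) : c * exp (f x) ≠ 0 := mul_ne_zero hc (exp_ne_zero _)
  have hslit : ∀ x ∈ s, c * exp (f x) ∈ slitPlane := fun x hx ↦ by
    rcases (hre x hx).lt_or_eq with h | h
    · exact Or.inl h
    · exact Or.inr fun him ↦ hne x (Complex.ext h.symm him)
  have key := hs.eq_of_exp_eq (f := fun x ↦ f x - log (c * exp (f x)))
    (hf.sub ((continuousOn_const.mul hf.cexp).clog hslit))
    (fun a _ b _ ↦ by
      simp only [exp_sub, exp_log (hne _)]
      have := exp_ne_zero (f a)
      have := exp_ne_zero (f b)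
      field_simp) hx hy
  linear_combination key

theorem Convex.exists_continuousOn_exp_eq {U : Set (ℝ × ℝ)} (hU : Convex ℝ U) (hUo : IsOpen U)
    (hne : U.Nonempty) {g : ℝ × ℝ → ℂ} (hg : ContinuousOn g U) (h0 : ∀ p ∈ U, g p ≠ 0) :
    ∃ f : ℝ × ℝ → ℂ, ContinuousOn f U ∧ ∀ p ∈ U, exp (f p) = g p := by
  have := hU.contractibleSpace hne
  exact exists_continuousOn_eqOn_exp_comp (show SimplyConnectedSpace U from inferInstance) hUo hg (by rintro ⟨p, hp, h⟩; exact h0 p hp h)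

theorem Function.Periodic.ne_of_injOn_Ico {E : Type*} {γ : ℝ → E} (hper : Function.Periodic γ 1)
    (hinj : InjOn γ (Ico 0 1)) {u v : ℝ} (huv : u < v) (hvu : v < u + 1) : γ u ≠ γ v := by
  intro h
  have hfract (t : ℝ) : γ (Int.fract t) = γ t := by
    have := hper.sub_int_mul_eq (x := t) ⌊t⌋
    rwa [mul_one, Int.self_sub_floor] at this
  have hmem (t : ℝ) : Int.fract t ∈ Ico (0 : ℝ) 1 := ⟨Int.fract_nonneg t, Int.fract_lt_one t⟩
  have := hinj (hmem u) (hmem v) (by rw [hfract, hfract, h])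
  obtain ⟨z, hz⟩ := Int.fract_eq_fract.1 this
  have h1 : (-1 : ℝ) < z := by linarith
  have h2 : (z : ℝ) < 0 := by linarith
  have h3 : -1 < z := by exact_mod_cast h1
  have h4 : z < 0 := by exact_mod_cast h2
  omega

/-- Two paths joining interlaced pairs of points of a closed curve meet, provided they stay in a
set that has a supporting line at every point of the curve. -/
theorem exists_path_eq_of_supporting_lines {K : Set ℂ} {γ : ℝ → ℂ} (hγ : Continuous γ)
    (hper : Function.Periodic γ 1) (hinj : InjOn γ (Ico 0 1)) (hK : ∀ t, γ t ∈ K)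
    (hsupp : ∀ t, ∃ c : ℂ, c ≠ 0 ∧ ∀ y ∈ K, 0 ≤ (c * (γ t - y)).re)
    {t₁ t₂ t₃ t₄ : ℝ} (h12 : t₁ < t₂) (h23 : t₂ < t₃) (h34 : t₃ < t₄) (h41 : t₄ < t₁ + 1)
    (α : Path (γ t₁) (γ t₃)) (β : Path (γ t₂) (γ t₄)) (hα : ∀ s, α s ∈ K) (hβ : ∀ s, β s ∈ K) :
    ∃ s t, α s = β t := by
  by_contra! hne
  set D : Set (ℝ × ℝ) := {p | p.1 < p.2 ∧ p.2 < p.1 + 1} with hD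
  have hDo : IsOpen D := (isOpen_lt continuous_fst continuous_snd).inter
    (isOpen_lt continuous_snd (continuous_fst.add continuous_const))
  have hDc : Convex ℝ D := by
    rintro ⟨a, b⟩ ⟨h1, h2⟩ ⟨a', b'⟩ ⟨h3, h4⟩ x y hx hy hxy
    simp only [hD, mem_ofPred_eq, Prod.smul_mk, Prod.mk_add_mk, smul_eq_mul] at *
    obtain rfl : y = 1 - x := by linarith
    rcases hx.eq_or_lt with rfl | hx
    · constructor <;> linarith
    · constructor <;> nlinarith
  obtain ⟨Θ, hΘc, hΘ⟩ := hDc.exists_continuousOn_exp_eq hDo ⟨(0, 1 / 2), by norm_num [hD]⟩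
    (g := fun p ↦ γ p.1 - γ p.2) (by fun_prop)
    (fun p hp ↦ sub_ne_zero.2 (hper.ne_of_injOn_Ico hinj hp.1 hp.2))
  obtain ⟨L, hLc, hL⟩ := convex_univ.exists_continuousOn_exp_eq isOpen_univ ⟨0, trivial⟩
    (g := fun p ↦ α.extend p.1 - β.extend p.2) (by fun_prop)
    (fun p _ ↦ sub_ne_zero.2 (hne _ _))
  rw [continuousOn_univ] at hLc
  have hαK (s : ℝ) : α.extend s ∈ K := hα _
  have hβK (s : ℝ) : β.extend s ∈ K := hβ _
  -- A half turn of the chord reverses it.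
  have hturn : ∀ p ∈ D, (p.2, p.1 + 1) ∈ D := fun p hp ↦ ⟨hp.2, by linarith [hp.1]⟩
  have hturn_exp : ∀ p ∈ D, exp (Θ (p.2, p.1 + 1) - Θ p) = -1 := fun p hp ↦ by
    rw [exp_sub, hΘ _ (hturn p hp), hΘ p hp, div_eq_iff (hΘ p hp ▸ exp_ne_zero _), hper]
    ring
  have hm12 : (t₁, t₂) ∈ D := ⟨h12, by simp only; linarith⟩
  have hm21 : (t₂, t₁ + 1) ∈ D := hturn _ hm12
  have hconst := hDc.isPreconnected.eq_of_exp_eq (f := fun p ↦ Θ (p.2, p.1 + 1) - Θ p)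
    ((hΘc.comp (by fun_prop) hturn).sub hΘc)
    (fun a ha b hb ↦ by rw [hturn_exp a ha, hturn_exp b hb]) hm12 hm21
  have hedge_left (u v w a b d : ℝ) (hv : (u, v) ∈ D) (hw : (u, w) ∈ D)
      (ha : α.extend a = γ u) (hb : β.extend b = γ v) (hd : β.extend d = γ w) :
      Θ (u, v) - Θ (u, w) = L (a, b) - L (a, d) := by
    obtain ⟨c, hc, hcK⟩ := hsupp u
    have hslice : IsPreconnected {t | (u, t) ∈ D} := by
      have : {t | (u, t) ∈ D} = Ioo u (u + 1) := rfl
      rw [this]; exact isPreconnected_Ioo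
    have e1 := hslice.sub_eq_log_sub_log (f := fun t ↦ Θ (u, t))
      (hΘc.comp (by fun_prop) (fun t ht ↦ ht)) hc
      (fun t ht ↦ by rw [hΘ _ ht]; exact hcK _ (hK t)) hv hw
    have e2 := isPreconnected_univ.sub_eq_log_sub_log (f := fun t ↦ L (a, t))
      (Continuous.continuousOn (by fun_prop)) hc
      (fun t _ ↦ by rw [hL _ trivial, ha]; exact hcK _ (hβK t)) (mem_univ b) (mem_univ d)
    simp only [hΘ _ hv, hΘ _ hw] at e1
    simp only [hL _ trivial, ha, hb, hd] at e2
    rw [e1, e2]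
  have hedge_right (u v w a b d : ℝ) (hv : (v, u) ∈ D) (hw : (w, u) ∈ D)
      (ha : β.extend a = γ u) (hb : α.extend b = γ v) (hd : α.extend d = γ w) :
      Θ (v, u) - Θ (w, u) = L (b, a) - L (d, a) := by
    obtain ⟨c, hc, hcK⟩ := hsupp u
    have hcK' (y : ℂ) (hy : y ∈ K) : 0 ≤ (-c * (y - γ u)).re := by
      have := hcK y hy
      rwa [show -c * (y - γ u) = c * (γ u - y) by ring]
    have hslice : IsPreconnected {t | (t, u) ∈ D} := by
      have : {t | (t, u) ∈ D} = Ioo (u - 1) u := by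
        ext t
        simp only [hD, mem_ofPred_eq, mem_Ioo, sub_lt_iff_lt_add, and_comm]
      rw [this]; exact isPreconnected_Ioo
    have e1 := hslice.sub_eq_log_sub_log (f := fun t ↦ Θ (t, u))
      (hΘc.comp (by fun_prop) (fun t ht ↦ ht)) (neg_ne_zero.2 hc)
      (fun t ht ↦ by rw [hΘ _ ht]; exact hcK' _ (hK t)) hv hw
    have e2 := isPreconnected_univ.sub_eq_log_sub_log (f := fun t ↦ L (t, a))
      (Continuous.continuousOn (by fun_prop)) (neg_ne_zero.2 hc)
      (fun t _ ↦ by rw [hL _ trivial, ha]; exact hcK' _ (hαK t)) (mem_univ b) (mem_univ d)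
    simp only [hΘ _ hv, hΘ _ hw] at e1
    simp only [hL _ trivial, ha, hb, hd] at e2
    rw [e1, e2]
  have hm14 : (t₁, t₄) ∈ D := ⟨by simp only; linarith, h41⟩
  have hm34 : (t₃, t₄) ∈ D := ⟨h34, by simp only; linarith⟩
  have hm32 : (t₃, t₂ + 1) ∈ D := ⟨by simp only; linarith, by simp only; linarith⟩
  have hm12' : (t₁ + 1, t₂ + 1) ∈ D := ⟨by simp only; linarith, by simp only; linarith⟩
  have e1 := hedge_left t₁ t₄ t₂ 0 1 0 hm14 hm12 (by simp) (by simp) (by simp)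
  have e2 := hedge_right t₄ t₃ t₁ 1 1 0 hm34 hm14 (by simp) (by simp) (by simp)
  have e3 := hedge_left t₃ (t₂ + 1) t₄ 1 0 1 hm32 hm34 (by simp) (by simp [hper t₂]) (by simp)
  have e4 := hedge_right (t₂ + 1) (t₁ + 1) t₃ 0 0 1 hm12' hm32 (by simp [hper t₂])
    (by simp [hper t₁]) (by simp)
  have hzero : Θ (t₂, t₁ + 1) - Θ (t₁, t₂) = 0 := by
    simp only at hconst
    linear_combination (e1 + e2 + e3 + e4 + hconst) / 2
  have := hturn_exp _ hm12
  simp only [hzero, exp_zero] at this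
  norm_num at this

/-- A convex set with nonempty interior has a supporting line at each point of its frontier. -/
theorem Convex.exists_supporting_line {K : Set (ℝ × ℝ)} (hK : Convex ℝ K)
    (hne : (interior K).Nonempty) {x : ℝ × ℝ} (hx : x ∈ frontier K) :
    ∃ c : ℂ, c ≠ 0 ∧
      ∀ y ∈ K, 0 ≤ (c * (equivRealProdCLM.symm x - equivRealProdCLM.symm y)).re := by
  obtain ⟨f, hf⟩ := geometric_hahn_banach_open_point hK.interior isOpen_interior hx.2
  have hfc (y : ℝ × ℝ) : f y = y.1 * f (1, 0) + y.2 * f (0, 1) := by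
    conv_lhs => rw [show y = y.1 • ((1 : ℝ), (0 : ℝ)) + y.2 • ((0 : ℝ), (1 : ℝ)) by ext <;> simp]
    rw [map_add, map_smul, map_smul, smul_eq_mul, smul_eq_mul]
  refine ⟨⟨f (1, 0), -f (0, 1)⟩, fun h0 ↦ ?_, fun y hy ↦ ?_⟩
  · obtain ⟨y, hy⟩ := hne
    have h1 : f (1, 0) = 0 := congrArg re h0
    have h2 : f (0, 1) = 0 := by simpa using congrArg im h0
    have := hf y hy
    simp [hfc x, hfc y, h1, h2] at this
  · have hle : f y ≤ f x := by
      have hcl : y ∈ closure (interior K) := by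
        rw [hK.closure_interior_eq_closure_of_nonempty_interior hne]
        exact subset_closure hy
      exact closure_minimal (fun z hz ↦ (hf z hz).le)
        (isClosed_le f.continuous continuous_const) hcl
    rw [hfc x, hfc y] at hle
    simp [equivRealProdCLM_symm_apply]
    linarith

theorem IsPreconnected.joinedIn_inter_thickening {E : Type*} [NormedAddCommGroup E]
    [NormedSpace ℝ E] {K C : Set E} (hK : Convex ℝ K) (hC : IsPreconnected C) (hCK : C ⊆ K)
    {δ : ℝ} (hδ : 0 < δ) {x y : E} (hx : x ∈ C) (hy : y ∈ C) :
    JoinedIn (K ∩ Metric.thickening δ C) x y := by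
  refine hC.induction₂ (JoinedIn (K ∩ Metric.thickening δ C)) (fun a ha ↦ ?_)
    (fun _ _ _ _ _ _ h h' ↦ h.trans h') (fun _ _ _ _ h ↦ h.symm) hx hy
  filter_upwards [self_mem_nhdsWithin, mem_nhdsWithin_of_mem_nhds (Metric.ball_mem_nhds a hδ)]
    with b hb hba
  refine JoinedIn.of_segment_subset (subset_inter (hK.segment_subset (hCK ha) (hCK hb)) ?_)
  exact ((convex_ball a δ).segment_subset (Metric.mem_ball_self hδ) hba).trans
    (Metric.ball_subset_thickening ha δ)

theorem IsClosed.isClosed_connectedComponentIn {X : Type*} [TopologicalSpace X] {F : Set X}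
    (hF : IsClosed F) (x : X) : IsClosed (connectedComponentIn F x) := by
  by_cases hx : x ∈ F
  · refine isClosed_of_closure_subset ?_
    exact isPreconnected_connectedComponentIn.closure.subset_connectedComponentIn
      (subset_closure (mem_connectedComponentIn hx))
      (closure_minimal (connectedComponentIn_subset F x) hF)
  · simp [connectedComponentIn_eq_empty hx]


/-- four points in cyclic order on the boundary of a nondegenerate compact
convex set `K ⊆ ℝ²`, pairwise-oppositely connected in a compact `F ⊆ K`, all lie in one
connected component of `F`. The boundary is parametrized by a continuous, 1-periodic map
`γ` injective on a period, and cyclic order means `t₁ ≤ t₂ ≤ t₃ ≤ t₄ < t₁ + 1`. -/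
theorem stmt_2 (K F : Set (ℝ × ℝ)) (hKcomp : IsCompact K) (hKconv : Convex ℝ K)
    (hKnd : (interior K).Nonempty) (hFK : F ⊆ K) (hFcomp : IsCompact F)
    (γ : ℝ → ℝ × ℝ) (hγcont : Continuous γ) (hγper : Function.Periodic γ 1)
    (hγrange : Set.range γ = frontier K) (hγinj : Set.InjOn γ (Set.Ico 0 1))
    (t₁ t₂ t₃ t₄ : ℝ) (h12 : t₁ ≤ t₂) (h23 : t₂ ≤ t₃) (h34 : t₃ ≤ t₄) (hcyc : t₄ < t₁ + 1)
    (x₁ x₂ x₃ x₄ : ℝ × ℝ)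
    (hx₁ : x₁ = γ t₁) (hx₂ : x₂ = γ t₂) (hx₃ : x₃ = γ t₃) (hx₄ : x₄ = γ t₄)
    (hx₁F : x₁ ∈ F) (hx₂F : x₂ ∈ F) (hx₃F : x₃ ∈ F) (hx₄F : x₄ ∈ F)
    (h13 : connectedComponentIn F x₁ = connectedComponentIn F x₃)
    (h24 : connectedComponentIn F x₂ = connectedComponentIn F x₄) :
    connectedComponentIn F x₁ = connectedComponentIn F x₂ ∧
      connectedComponentIn F x₁ = connectedComponentIn F x₃ ∧
      connectedComponentIn F x₁ = connectedComponentIn F x₄ := by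
  subst hx₁ hx₂ hx₃ hx₄
  suffices h : connectedComponentIn F (γ t₁) = connectedComponentIn F (γ t₂) from
    ⟨h, h13, h.trans h24⟩
  by_contra hne
  have h12' : t₁ < t₂ := h12.lt_of_ne (by rintro rfl; exact hne rfl)
  have h23' : t₂ < t₃ := h23.lt_of_ne (by rintro rfl; exact hne h13)
  have h34' : t₃ < t₄ := h34.lt_of_ne (by rintro rfl; exact hne (h13.trans h24.symm))
  have hdisj : Disjoint (connectedComponentIn F (γ t₁)) (connectedComponentIn F (γ t₂)) :=
    disjoint_left.2 fun z hz hz' ↦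
      hne ((connectedComponentIn_eq hz).trans (connectedComponentIn_eq hz').symm)
  have hcl := hFcomp.isClosed.isClosed_connectedComponentIn
  obtain ⟨δ, hδ, hthick⟩ := hdisj.exists_thickenings
    (hFcomp.of_isClosed_subset (hcl _) (connectedComponentIn_subset F _)) (hcl _)
  have hsub (x : ℝ × ℝ) : connectedComponentIn F x ⊆ K := (connectedComponentIn_subset F x).trans hFK
  obtain ⟨α, hα⟩ := isPreconnected_connectedComponentIn.joinedIn_inter_thickening hKconv
    (hsub _) hδ (mem_connectedComponentIn hx₁F) (h13 ▸ mem_connectedComponentIn hx₃F)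
  obtain ⟨β, hβ⟩ := isPreconnected_connectedComponentIn.joinedIn_inter_thickening hKconv
    (hsub _) hδ (mem_connectedComponentIn hx₂F) (h24 ▸ mem_connectedComponentIn hx₄F)
  have hfr (t : ℝ) : γ t ∈ frontier K := hγrange ▸ mem_range_self t
  let e := equivRealProdCLM.symm
  obtain ⟨s, t, hst⟩ := exists_path_eq_of_supporting_lines (K := e '' K) (γ := e ∘ γ)
    (e.continuous.comp hγcont) (hγper.comp e) (e.injective.comp_injOn hγinj)
    (fun t ↦ mem_image_of_mem e (hKcomp.isClosed.frontier_subset (hfr t)))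
    (fun t ↦ by
      obtain ⟨c, hc, hcK⟩ := hKconv.exists_supporting_line hKnd (hfr t)
      exact ⟨c, hc, forall_mem_image.2 hcK⟩)
    h12' h23' h34' hcyc (α.map e.continuous) (β.map e.continuous)
    (fun s ↦ mem_image_of_mem e (hα s).1) (fun s ↦ mem_image_of_mem e (hβ s).1)
  have hst' : α s = β t := e.injective hst
  exact disjoint_left.1 hthick (hα s).2 (hst' ▸ (hβ t).2)
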